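/- Let e₀, e₁ ∈ 𝓞_K^{n+1} satisfy B(e₀,e₀) > 0, B(e₁,e₁) > 0 and B(e₀,e₁)² ≥ B(e₀,e₀)·B(e₁,e₁) (in particular B(e₀,e₁) ≠ 0). Let S ⊆ {2,…,d} be the set of indices j for which σⱼ(B(e₀,e₀))·σⱼ(B(e₁,e₁)) > σⱼ(B(e₀,e₁))², and let C ≥ 2 be an integer satisfying C ≥ ∏_{j∈S} σⱼ(B(e₀,e₀))·σⱼ(B(e₁,e₁)) / σⱼ(B(e₀,e₁))². Then every h ∈ O_F(𝓞_K) that is congruent to the identity modulo 2C·B(e₀,e₁) satisfies |σ₁(B(h·e₀, e₁))| ≥ |σ₁(B(e₀,e₁))|, and consequently B(h·e₀, e₁)² ≥ B(h·e₀, h·e₀)·B(e₁,e₁). -/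

import Mathlib

open scoped Matrix

noncomputable section

/-- The bilinear form `B(u,v) = uᵀ F v` associated to a matrix `F`. -/
def bilinForm {m : ℕ} {R : Type*} [CommRing R] (F : Matrix (Fin m) (Fin m) R)
    (u v : Fin m → R) : R :=
  dotProduct u (F.mulVec v)

/-- The orthogonal group of the bilinear form with matrix `F`, as a subgroup of `GL`. -/
def orthogonalSubgroup {m : ℕ} {R : Type*} [CommRing R] (F : Matrix (Fin m) (Fin m) R) :
    Subgroup (GL (Fin m) R) where
  carrier := {h | ((h : Matrix (Fin m) (Fin m) R))ᵀ * F * (h : Matrix (Fin m) (Fin m) R) = F}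
  one_mem' := by simp
  mul_mem' := by
    intro a b ha hb
    simp only [Set.mem_setOf_eq, Units.val_mul, Matrix.transpose_mul] at *
    calc (b : Matrix (Fin m) (Fin m) R)ᵀ * (a : Matrix (Fin m) (Fin m) R)ᵀ * F *
          ((a : Matrix (Fin m) (Fin m) R) * (b : Matrix (Fin m) (Fin m) R))
        = (b : Matrix (Fin m) (Fin m) R)ᵀ *
            ((a : Matrix (Fin m) (Fin m) R)ᵀ * F * (a : Matrix (Fin m) (Fin m) R)) *
            (b : Matrix (Fin m) (Fin m) R) := by
          simp only [Matrix.mul_assoc]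
      _ = F := by rw [ha]; exact hb
  inv_mem' := by
    intro a ha
    simp only [Set.mem_setOf_eq] at *
    have h1 : (a : Matrix (Fin m) (Fin m) R) *
        ((a⁻¹ : GL (Fin m) R) : Matrix (Fin m) (Fin m) R) = 1 := by
      rw [← Units.val_mul, mul_inv_cancel, Units.val_one]
    calc ((a⁻¹ : GL (Fin m) R) : Matrix (Fin m) (Fin m) R)ᵀ * F *
          ((a⁻¹ : GL (Fin m) R) : Matrix (Fin m) (Fin m) R)
        = ((a⁻¹ : GL (Fin m) R) : Matrix (Fin m) (Fin m) R)ᵀ *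
            ((a : Matrix (Fin m) (Fin m) R)ᵀ * F * (a : Matrix (Fin m) (Fin m) R)) *
            ((a⁻¹ : GL (Fin m) R) : Matrix (Fin m) (Fin m) R) := by rw [ha]
      _ = ((a : Matrix (Fin m) (Fin m) R) *
            ((a⁻¹ : GL (Fin m) R) : Matrix (Fin m) (Fin m) R))ᵀ * F *
            ((a : Matrix (Fin m) (Fin m) R) *
              ((a⁻¹ : GL (Fin m) R) : Matrix (Fin m) (Fin m) R)) := by
          simp only [Matrix.transpose_mul, Matrix.mul_assoc]
      _ = F := by rw [h1]; simp

/-- The real embedding of `𝓞 K` induced by a real embedding `σ` of `K`. -/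
def embOK {K : Type*} [Field K] [NumberField K] (σ : K →+* ℝ) :
    NumberField.RingOfIntegers K →+* ℝ :=
  σ.comp (algebraMap (NumberField.RingOfIntegers K) K)

/-- `u` is a `K`-scalar multiple of `v` (both viewed as vectors in `K^m`). -/
def IsKScalarMultiple {K : Type*} [Field K] [NumberField K] {m : ℕ}
    (u v : Fin m → NumberField.RingOfIntegers K) : Prop :=
  ∃ c : K, (fun t => algebraMap (NumberField.RingOfIntegers K) K (u t)) =
    c • (fun t => algebraMap (NumberField.RingOfIntegers K) K (v t))

/-!
Write `B(he₀, e₁) = B(e₀, e₁) (1 + 2Cα)` with `α ∈ 𝓞 K`. At every place `j ≠ j₁` the form is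
positive semidefinite, so Cauchy–Schwarz bounds `(1 + 2C σⱼ(α))²` by
`ρⱼ = σⱼ(B(e₀, e₀)) σⱼ(B(e₁, e₁)) / σⱼ(B(e₀, e₁))²`, whence `|σⱼ(α)| ≤ max 1 ρⱼ`. If moreover
`|1 + 2C σ₁(α)| < 1`, then `α ≠ 0` and `|σ₁(α)| < 1 / C`, so the norm of the nonzero algebraic
integer `α` has absolute value less than `(1 / C) ∏ max 1 ρⱼ ≤ 1`, which is absurd.
-/

section BilinForm

variable {m : ℕ} {R : Type*} [CommRing R]

theorem bilinForm_eq_toBilin' (F : Matrix (Fin m) (Fin m) R) (u v : Fin m → R) :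
    bilinForm F u v = F.toBilin' u v :=
  (F.toBilin'_apply' u v).symm

theorem map_bilinForm {R' : Type*} [CommRing R'] (f : R →+* R') (F : Matrix (Fin m) (Fin m) R)
    (u v : Fin m → R) : f (bilinForm F u v) = bilinForm (F.map f) (f ∘ u) (f ∘ v) := by
  simp only [bilinForm, dotProduct, Matrix.mulVec, map_sum, map_mul, Matrix.map_apply,
    Function.comp_apply]

theorem bilinForm_mulVec_mulVec {F h : Matrix (Fin m) (Fin m) R} (hh : hᵀ * F * h = F)
    (u v : Fin m → R) : bilinForm F (h *ᵥ u) (h *ᵥ v) = bilinForm F u v :=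
  calc bilinForm F (h *ᵥ u) (h *ᵥ v)
      = u ⬝ᵥ (hᵀ * F * h) *ᵥ v := by
        rw [bilinForm, ← Matrix.mulVec_mulVec, ← Matrix.mulVec_mulVec, Matrix.dotProduct_mulVec u,
          Matrix.vecMul_transpose]
    _ = bilinForm F u v := by rw [hh, bilinForm]

theorem dvd_bilinForm_mulVec_sub_bilinForm {h : Matrix (Fin m) (Fin m) R} {β : R}
    (hh : ∀ s t, (h - 1) s t ∈ Ideal.span {β}) (F : Matrix (Fin m) (Fin m) R) (u v : Fin m → R) :
    β ∣ bilinForm F (h *ᵥ u) v - bilinForm F u v := by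
  have hdiff : bilinForm F (h *ᵥ u) v - bilinForm F u v = ((h - 1) *ᵥ u) ⬝ᵥ F *ᵥ v := by
    rw [Matrix.sub_mulVec, Matrix.one_mulVec, sub_dotProduct, bilinForm, bilinForm]
  rw [hdiff]
  have hcoord (s : Fin m) : β ∣ ((h - 1) *ᵥ u) s := by
    rw [Matrix.mulVec, dotProduct]
    exact Finset.dvd_sum fun t _ => (Ideal.mem_span_singleton.1 (hh s t)).mul_right (u t)
  exact Finset.dvd_sum fun s _ => (hcoord s).mul_right _

theorem bilinForm_sq_le_of_posSemidef {F : Matrix (Fin m) (Fin m) ℝ} (hF : F.PosSemidef)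
    (u v : Fin m → ℝ) : bilinForm F u v ^ 2 ≤ bilinForm F u u * bilinForm F v v := by
  have hsymm : F.IsSymm :=
    (Matrix.conjTranspose_eq_transpose_of_trivial F).symm.trans hF.isHermitian
  simp only [bilinForm_eq_toBilin']
  refine LinearMap.BilinForm.apply_sq_le_of_symm F.toBilin' (fun x => ?_)
    (LinearMap.BilinForm.isSymm_iff.1 (Matrix.isSymm_toBilin'_iff_isSymm.2 hsymm)) u v
  rw [Matrix.toBilin'_apply']
  exact hF.dotProduct_mulVec_nonneg x

theorem map_bilinForm_mulVec_sq_le {F h : Matrix (Fin m) (Fin m) R} (hh : hᵀ * F * h = F)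
    {f : R →+* ℝ} (hpos : (F.map f).PosSemidef) (u v : Fin m → R) :
    f (bilinForm F (h *ᵥ u) v) ^ 2 ≤ f (bilinForm F u u) * f (bilinForm F v v) := by
  rw [← bilinForm_mulVec_mulVec hh u u]
  simp only [map_bilinForm f]
  exact bilinForm_sq_le_of_posSemidef hpos _ _

end BilinForm

theorem abs_le_of_sq_one_add_two_mul_le {R : Type*} [CommRing R] [LinearOrder R]
    [IsStrictOrderedRing R] {c x r : R} (hc : 1 ≤ c) (hr : 1 ≤ r)
    (hx : (1 + 2 * c * x) ^ 2 ≤ r) : |x| ≤ r := by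
  have hle : |1 + 2 * c * x| ≤ r := abs_le_of_sq_le_sq (by nlinarith) (by linarith)
  obtain ⟨hlower, hupper⟩ := abs_le.1 hle
  exact abs_le.2 ⟨by nlinarith, by nlinarith⟩

theorem prod_filter_one_lt_eq_prod_max_one {ι M : Type*} [CommMonoid M] [LinearOrder M]
    (T : Finset ι) (r : ι → M) :
    ∏ j ∈ T with 1 < r j, r j = ∏ j ∈ T, max 1 (r j) := by
  simp only [Finset.prod_filter, max_def_lt]

section RealEmbeddings

variable {K : Type*} [Field K] [NumberField K]

theorem embOK_injective (τ : K →+* ℝ) : Function.Injective (embOK τ) :=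
  τ.injective.comp NumberField.RingOfIntegers.coe_injective

variable {ι : Type*} [Fintype ι] (σ : ι → K →+* ℝ) (hσinj : Function.Injective σ)
  (htotreal : ∀ φ : K →+* ℂ, ∃ j, φ = Complex.ofRealHom.comp (σ j))

include hσinj htotreal

theorem norm_eq_prod_real_embeddings (x : K) : (Algebra.norm ℚ x : ℝ) = ∏ j, σ j x := by
  have hbij : Function.Bijective fun j =>
      RingHom.equivRatAlgHom K ℂ (Complex.ofRealHom.comp (σ j)) := by
    refine (RingHom.equivRatAlgHom K ℂ).bijective.comp ?_
    refine ⟨fun i j hij => hσinj (RingHom.ext fun y => ?_), fun φ => ?_⟩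
    · exact Complex.ofReal_injective (RingHom.congr_fun hij y)
    · exact (htotreal φ).imp fun _ => Eq.symm
  apply Complex.ofReal_injective
  calc ((Algebra.norm ℚ x : ℝ) : ℂ) = Algebra.norm ℚ x := Complex.ofReal_ratCast _
    _ = ∏ φ : K →ₐ[ℚ] ℂ, φ x := Algebra.norm_eq_prod_embeddings ℚ ℂ x
    _ = ∏ j, (σ j x : ℂ) := (hbij.prod_comp fun φ : K →ₐ[ℚ] ℂ => φ x).symm
    _ = ((∏ j, σ j x : ℝ) : ℂ) := (Complex.ofReal_prod _ _).symm

theorem one_le_prod_abs_embOK {a : NumberField.RingOfIntegers K} (ha : a ≠ 0) :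
    1 ≤ ∏ j, |embOK (σ j) a| := by
  have hnorm : ((Algebra.norm ℤ a : ℤ) : ℝ) = ∏ j, embOK (σ j) a :=
    calc ((Algebra.norm ℤ a : ℤ) : ℝ) = (Algebra.norm ℚ (a : K) : ℝ) := by
          rw [← Algebra.coe_norm_int, Rat.cast_intCast]
      _ = ∏ j, embOK (σ j) a := norm_eq_prod_real_embeddings σ hσinj htotreal a
  rw [← Finset.abs_prod, ← hnorm]
  exact_mod_cast Int.one_le_abs (Algebra.norm_ne_zero_iff.2 ha)

theorem one_le_abs_one_add_two_mul_embOK [DecidableEq ι] {j₁ : ι} {c : ℝ} {r : ι → ℝ}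
    (hc : ∏ j ∈ {j₁}ᶜ, max 1 (r j) ≤ c) {a : NumberField.RingOfIntegers K}
    (ha : ∀ j, j ≠ j₁ → (1 + 2 * c * embOK (σ j) a) ^ 2 ≤ r j) :
    1 ≤ |1 + 2 * c * embOK (σ j₁) a| := by
  by_contra! hlt
  have hc1 : 1 ≤ c := (Finset.one_le_prod fun j _ => le_max_left 1 (r j)).trans hc
  have ha0 : a ≠ 0 := by
    rintro rfl
    simp at hlt
  have hother : ∏ j ∈ {j₁}ᶜ, |embOK (σ j) a| ≤ c := by
    refine (Finset.prod_le_prod (fun j _ => abs_nonneg _) fun j hj => ?_).trans hc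
    have hj : j ≠ j₁ := by simpa using hj
    exact abs_le_of_sq_one_add_two_mul_le hc1 (le_max_left _ _)
      ((ha j hj).trans (le_max_right _ _))
  have hsmall : |embOK (σ j₁) a| * c < 1 := by
    rw [← abs_of_pos (one_pos.trans_le hc1), ← abs_mul]
    rw [abs_lt] at hlt ⊢
    constructor <;> linarith
  have hprod := one_le_prod_abs_embOK σ hσinj htotreal ha0
  rw [Fintype.prod_eq_mul_prod_compl j₁] at hprod
  exact (hprod.trans (mul_le_mul_of_nonneg_left hother (abs_nonneg _))).not_gt hsmall

end RealEmbeddings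

theorem congruence_elements_keep_hyperplanes_apart_general
    {K : Type*} [Field K] [NumberField K] {ι : Type*}
    (σ : ι → K →+* ℝ) (hσinj : Function.Injective σ)
    (htotreal : ∀ φ : K →+* ℂ, ∃ j, φ = Complex.ofRealHom.comp (σ j)) {j₁ : ι} {m : ℕ}
    (F : Matrix (Fin m) (Fin m) (NumberField.RingOfIntegers K))
    (hFpos : ∀ j, j ≠ j₁ → (F.map (embOK (σ j))).PosSemidef)
    {e₀ e₁ : Fin m → NumberField.RingOfIntegers K}
    (hsep : embOK (σ j₁) (bilinForm F e₀ e₁) ^ 2 ≥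
      embOK (σ j₁) (bilinForm F e₀ e₀) * embOK (σ j₁) (bilinForm F e₁ e₁))
    (hne : bilinForm F e₀ e₁ ≠ 0) {S : Finset ι}
    (hS : ∀ j, j ∈ S ↔ j ≠ j₁ ∧
      embOK (σ j) (bilinForm F e₀ e₀) * embOK (σ j) (bilinForm F e₁ e₁) >
        embOK (σ j) (bilinForm F e₀ e₁) ^ 2)
    {C : ℕ}
    (hC : ∏ j ∈ S, embOK (σ j) (bilinForm F e₀ e₀) * embOK (σ j) (bilinForm F e₁ e₁) /
      embOK (σ j) (bilinForm F e₀ e₁) ^ 2 ≤ (C : ℝ))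
    {h : Matrix (Fin m) (Fin m) (NumberField.RingOfIntegers K)} (hmem : hᵀ * F * h = F)
    (hcong : ∀ s t, (h - 1) s t ∈
      Ideal.span {2 * (C : NumberField.RingOfIntegers K) * bilinForm F e₀ e₁}) :
    |embOK (σ j₁) (bilinForm F (h *ᵥ e₀) e₁)| ≥ |embOK (σ j₁) (bilinForm F e₀ e₁)| ∧
    embOK (σ j₁) (bilinForm F (h *ᵥ e₀) e₁) ^ 2 ≥
      embOK (σ j₁) (bilinForm F (h *ᵥ e₀) (h *ᵥ e₀)) * embOK (σ j₁) (bilinForm F e₁ e₁) := by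
  classical
  have : Fintype ι := Fintype.ofInjective σ hσinj
  obtain ⟨a, ha⟩ := dvd_bilinForm_mulVec_sub_bilinForm hcong F e₀ e₁
  have hfactor (j : ι) : embOK (σ j) (bilinForm F (h *ᵥ e₀) e₁) =
      embOK (σ j) (bilinForm F e₀ e₁) * (1 + 2 * C * embOK (σ j) a) := by
    rw [sub_eq_iff_eq_add.1 ha]
    simp only [map_add, map_mul, map_natCast, map_ofNat]
    ring
  have hsq_pos (j : ι) : 0 < embOK (σ j) (bilinForm F e₀ e₁) ^ 2 :=
    sq_pos_of_ne_zero ((map_ne_zero_iff _ (embOK_injective (σ j))).2 hne)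
  let ρ (j : ι) : ℝ := embOK (σ j) (bilinForm F e₀ e₀) * embOK (σ j) (bilinForm F e₁ e₁) /
    embOK (σ j) (bilinForm F e₀ e₁) ^ 2
  have hS_eq : S = {j ∈ ({j₁}ᶜ : Finset ι) | 1 < ρ j} := by
    ext j
    simp [ρ, hS j, one_lt_div (hsq_pos j)]
  have hfactor_sq_le (j : ι) (hj : j ≠ j₁) : (1 + 2 * C * embOK (σ j) a) ^ 2 ≤ ρ j := by
    rw [le_div_iff₀' (hsq_pos j), ← mul_pow, ← hfactor j]
    exact map_bilinForm_mulVec_sq_le hmem (hFpos j hj) e₀ e₁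
  have hone_le : 1 ≤ |1 + 2 * C * embOK (σ j₁) a| := by
    refine one_le_abs_one_add_two_mul_embOK σ hσinj htotreal ?_ hfactor_sq_le
    rwa [← prod_filter_one_lt_eq_prod_max_one, ← hS_eq]
  have habs : |embOK (σ j₁) (bilinForm F (h *ᵥ e₀) e₁)| ≥ |embOK (σ j₁) (bilinForm F e₀ e₁)| := by
    rw [hfactor, abs_mul]
    exact le_mul_of_one_le_right (abs_nonneg _) hone_le
  refine ⟨habs, ?_⟩
  rw [bilinForm_mulVec_mulVec hmem]
  exact hsep.trans (sq_le_sq.2 habs)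

/-- Congruence subgroup estimate from the proof of the generalised Margulis–Vinberg lemma.
Let `K` be a totally real number field with real embeddings `σ 0, …, σ (d-1)` (the family
`σ` enumerates all of them without repetition and every complex embedding of `K` factors
through one of them), with distinguished embedding `σ j₁`; positivity of elements of `K`
refers to images under `σ j₁`.  Let `F` be a symmetric matrix over `𝓞 K` of size `n+1`,
`n ≥ 2`, with `σ j (F)` positive definite for all `j ≠ j₁`.  Suppose
`e₀, e₁ ∈ 𝓞 K^{n+1}` satisfy `B(e₀,e₀) > 0`, `B(e₁,e₁) > 0` and
`B(e₀,e₁)² ≥ B(e₀,e₀)·B(e₁,e₁)` (in particular `B(e₀,e₁) ≠ 0`).  Let `S` be the set of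
indices `j ≠ j₁` with `σⱼ(B(e₀,e₀))·σⱼ(B(e₁,e₁)) > σⱼ(B(e₀,e₁))²` and let `C ≥ 2` be an
integer at least `∏_{j ∈ S} σⱼ(B(e₀,e₀))·σⱼ(B(e₁,e₁)) / σⱼ(B(e₀,e₁))²`.  Then every
`h ∈ O_F(𝓞 K)` congruent to the identity modulo `2·C·B(e₀,e₁)` satisfies
`|σ₁(B(h·e₀,e₁))| ≥ |σ₁(B(e₀,e₁))|`, and consequently
`B(h·e₀,e₁)² ≥ B(h·e₀,h·e₀)·B(e₁,e₁)`. -/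
theorem congruence_elements_keep_hyperplanes_apart
    (K : Type*) [Field K] [NumberField K]
    (d : ℕ) (σ : Fin d → (K →+* ℝ))
    (hσinj : Function.Injective σ)
    (hσall : ∀ τ : K →+* ℝ, ∃ j : Fin d, τ = σ j)
    (htotreal : ∀ φ : K →+* ℂ, ∃ j : Fin d, φ = Complex.ofRealHom.comp (σ j))
    (j₁ : Fin d)
    (n : ℕ) (hn : 2 ≤ n)
    (F : Matrix (Fin (n + 1)) (Fin (n + 1)) (NumberField.RingOfIntegers K))
    (hFsymm : F.IsSymm)
    (hFpos : ∀ j : Fin d, j ≠ j₁ → (F.map (embOK (σ j))).PosDef)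
    (e₀ e₁ : Fin (n + 1) → NumberField.RingOfIntegers K)
    (hpos₀ : 0 < embOK (σ j₁) (bilinForm F e₀ e₀))
    (hpos₁ : 0 < embOK (σ j₁) (bilinForm F e₁ e₁))
    (hsep : (embOK (σ j₁) (bilinForm F e₀ e₁)) ^ 2 ≥
      embOK (σ j₁) (bilinForm F e₀ e₀) * embOK (σ j₁) (bilinForm F e₁ e₁))
    (hne : bilinForm F e₀ e₁ ≠ 0)
    (S : Finset (Fin d))
    (hS : ∀ j : Fin d, j ∈ S ↔ j ≠ j₁ ∧
      embOK (σ j) (bilinForm F e₀ e₀) * embOK (σ j) (bilinForm F e₁ e₁) >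
        (embOK (σ j) (bilinForm F e₀ e₁)) ^ 2)
    (C : ℕ) (hC2 : 2 ≤ C)
    (hC : (∏ j ∈ S,
        embOK (σ j) (bilinForm F e₀ e₀) * embOK (σ j) (bilinForm F e₁ e₁) /
          (embOK (σ j) (bilinForm F e₀ e₁)) ^ 2) ≤ (C : ℝ))
    (h : GL (Fin (n + 1)) (NumberField.RingOfIntegers K))
    (hmem : h ∈ orthogonalSubgroup F)
    (hcong : ∀ s t : Fin (n + 1),
      ((h : Matrix (Fin (n + 1)) (Fin (n + 1)) (NumberField.RingOfIntegers K)) - 1) s t ∈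
        Ideal.span {2 * (C : NumberField.RingOfIntegers K) * bilinForm F e₀ e₁}) :
    |embOK (σ j₁) (bilinForm F
        ((h : Matrix (Fin (n + 1)) (Fin (n + 1)) (NumberField.RingOfIntegers K)).mulVec e₀)
        e₁)| ≥ |embOK (σ j₁) (bilinForm F e₀ e₁)| ∧
    (embOK (σ j₁) (bilinForm F
        ((h : Matrix (Fin (n + 1)) (Fin (n + 1)) (NumberField.RingOfIntegers K)).mulVec e₀)
        e₁)) ^ 2 ≥
      embOK (σ j₁) (bilinForm F
        ((h : Matrix (Fin (n + 1)) (Fin (n + 1)) (NumberField.RingOfIntegers K)).mulVec e₀)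
        ((h : Matrix (Fin (n + 1)) (Fin (n + 1)) (NumberField.RingOfIntegers K)).mulVec e₀)) *
      embOK (σ j₁) (bilinForm F e₁ e₁) :=
  congruence_elements_keep_hyperplanes_apart_general σ hσinj htotreal F
    (fun j hj => (hFpos j hj).posSemidef) hsep hne hS hC hmem hcong

end
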